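/- arXiv:2111.04387 — 2 statements merged into one kernel-verified Lean document; each statement's English description precedes it below -/
import Mathlib

section
/- Let m ≥ 3 be an odd integer. Then for all but finitely many primes p, the prime p divides the class number of the imaginary quadratic field ℚ(√(1 − 2m^p)); i.e., the set of primes p such that p does not divide the class number of ℚ(√(1 − 2m^p)) is finite. -/
open Polynomial NumberField

/-- A fixed choice of complex square root of the integer `d`. -/
noncomputable def sqrtC (d : ℤ) : ℂ := (d : ℂ) ^ ((1 : ℂ) / 2)

lemma sqrtC_sq (d : ℤ) : sqrtC d ^ 2 = (d : ℂ) := by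
  unfold sqrtC
  rcases eq_or_ne (d : ℂ) 0 with h | h
  · rw [h, Complex.zero_cpow (by norm_num : (1 : ℂ) / 2 ≠ 0)]
    simp
  · rw [pow_two, ← Complex.cpow_add _ _ h]
    norm_num

lemma isIntegral_sqrtC (d : ℤ) : IsIntegral ℚ (sqrtC d) := by
  refine ⟨X ^ 2 - C (d : ℚ), monic_X_pow_sub_C _ two_ne_zero, ?_⟩
  have : (Polynomial.aeval (sqrtC d)) (X ^ 2 - C (d : ℚ)) = 0 := by
    simp [sqrtC_sq]
  simpa [Polynomial.aeval_def] using this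

/-- The (number) field `ℚ(√d)`, realized as a subfield of `ℂ`. -/
noncomputable def Qsqrt (d : ℤ) : IntermediateField ℚ ℂ :=
  IntermediateField.adjoin ℚ {sqrtC d}

instance (d : ℤ) : FiniteDimensional ℚ (Qsqrt d) :=
  IntermediateField.adjoin.finiteDimensional (isIntegral_sqrtC d)

instance (d : ℤ) : NumberField (Qsqrt d) := ⟨⟩

/-!
For odd `n` put `D = 1 - 2 m ^ n` and `α = 1 - m ^ n + √D`. Then `α` is coprime to its conjugate and
has norm `m ^ (2 n)`, so `(α) = I ^ n` for an ideal `I`, and we show that the class of `I` has order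
exactly `n`. Otherwise `α` is associated to a `q`-th power for some prime `q ∣ n`; replacing `m` by
`M = m ^ (n / q)` we may take `n = q = 2 k + 1`. Units satisfy `w ^ 4 = 1`, hence are `q`-th powers,
and since `(1 + √D) ^ 2 = 2 α` there is an integer `c` with `c ^ q = 2 ^ k (1 + √D)`. Write
`c = t + δ` with `t ∈ ℤ` and `δ` purely imaginary. Parity gives `t` odd, and `t` divides the real
part `2 ^ k` of `c ^ q`, so `t = ±1`. As `c` has norm `2 M`, writing `M = 2 u + 1` yields
`δ ^ 2 = -1 - 4 u` and `(1 + δ) ^ 2 = 2 (-2 u + δ)`, so `(1 + δ) (-2 u + δ) ^ k` has real part `±1`.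
Since `(-2 u + δ) ^ 2 = -(1 + 4 u (1 - u + δ))`, this is impossible: for even `k ≠ 0` by a 2-adic
estimate, for odd `k` by congruences modulo `4 u` and, when `u = 1`, modulo `5`.
-/

lemma two_pow_mul_sq_dvd_one_add_four_mul_pow_sub {R : Type*} [CommRing R] (x : R) (k e : ℕ) :
    2 ^ (e + 3) * x ^ 2 ∣ (1 + 4 * x) ^ (2 ^ e * k) - (1 + 2 ^ (e + 2) * k * x) := by
  induction e with
  | zero =>
    obtain ⟨y, hy⟩ := powAddExpansion 1 (4 * x) k
    exact ⟨2 * y, by rw [pow_zero, one_mul, hy]; ring⟩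
  | succ e ih =>
    obtain ⟨y, hy⟩ := ih
    rw [sub_eq_iff_eq_add] at hy
    refine ⟨y + 2 ^ e * (k + 2 * x * y) ^ 2, ?_⟩
    rw [show 2 ^ (e + 1) * k = 2 ^ e * k * 2 by ring, pow_mul, hy]
    ring

section Zsqrtd

variable {d : ℤ}

lemma re_mul_modEq (x y : ℤ√d) : (x * y).re ≡ x.re * y.re [ZMOD d] :=
  (Int.modEq_iff_dvd.2 ⟨x.im * y.im, by rw [Zsqrtd.re_mul]; ring⟩).symm

lemma re_pow_modEq (x : ℤ√d) (n : ℕ) : (x ^ n).re ≡ x.re ^ n [ZMOD d] := by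
  induction n with
  | zero => simp
  | succ n ih => simpa only [pow_succ] using (re_mul_modEq _ _).trans (ih.mul_right _)

lemma re_dvd_re_pow_of_odd (x : ℤ√d) {n : ℕ} (hn : Odd n) : x.re ∣ (x ^ n).re := by
  have trace (y : ℤ√d) : y + star y = ((2 * y.re : ℤ) : ℤ√d) := by
    ext <;> simp only [Zsqrtd.re_add, Zsqrtd.im_add, Zsqrtd.re_star, Zsqrtd.im_star,
      Zsqrtd.re_intCast, Zsqrtd.im_intCast] <;> ring
  have hdvd : x + star x ∣ x ^ n + star (x ^ n) := by
    rw [star_pow]; exact hn.add_dvd_pow_add_pow x (star x)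
  rw [trace, trace, Zsqrtd.intCast_dvd_intCast] at hdvd
  exact Int.dvd_of_mul_dvd_mul_left two_ne_zero hdvd

lemma re_neg_mk_pow (a b : ℤ) (n : ℕ) :
    ((⟨-a, b⟩ : ℤ√d) ^ n).re = (-1) ^ n * ((⟨a, b⟩ : ℤ√d) ^ n).re := by
  have hneg : (⟨-a, b⟩ : ℤ√d) = ((-1 : ℤ) : ℤ√d) * star ⟨a, b⟩ := by ext <;> simp
  rw [hneg, mul_pow, ← Int.cast_pow, Zsqrtd.re_smul, ← star_pow, Zsqrtd.re_star]

lemma two_pow_mul_sq_dvd_re_mul_one_add_four_mul_pow_sub (u : ℤ) (z y : ℤ√d) (k e : ℕ) :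
    2 ^ (e + 3) * u ^ 2 ∣
      (z * (1 + 4 * (u * y)) ^ (2 ^ e * k)).re - (z.re + 2 ^ (e + 2) * k * u * (z * y).re) := by
  obtain ⟨w, hw⟩ := two_pow_mul_sq_dvd_one_add_four_mul_pow_sub (u * y) k e
  have key : z * (1 + 4 * (u * y)) ^ (2 ^ e * k) =
      z + ((2 ^ (e + 2) * k * u : ℤ) : ℤ√d) * (z * y)
        + ((2 ^ (e + 3) * u ^ 2 : ℤ) : ℤ√d) * (z * y ^ 2 * w) := by
    rw [sub_eq_iff_eq_add.1 hw]
    push_cast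
    ring
  rw [key, Zsqrtd.re_add, Zsqrtd.re_add, Zsqrtd.re_smul, Zsqrtd.re_smul, add_sub_cancel_left]
  exact dvd_mul_right _ _

lemma four_mul_dvd_re_mul_one_add_four_mul_pow_sub (u : ℤ) (z y : ℤ√d) (k : ℕ) :
    4 * u ∣ (z * (1 + 4 * (u * y)) ^ k).re - z.re := by
  obtain ⟨w, hw⟩ := sub_one_dvd_pow_sub_one (1 + 4 * (u * y)) k
  have key : z * (1 + 4 * (u * y)) ^ k = z + ((4 * u : ℤ) : ℤ√d) * (z * y * w) := by
    rw [sub_eq_iff_eq_add.1 hw]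
    push_cast
    ring
  rw [key, Zsqrtd.re_add, Zsqrtd.re_smul, add_sub_cancel_left]
  exact dvd_mul_right _ _

end Zsqrtd

section OneAddSqrtd

variable (u : ℤ)

lemma one_add_sqrtd_pow (n : ℕ) : (⟨1, 1⟩ : ℤ√(-1 - 4 * u)) ^ (2 * n + 1) =
    ((2 ^ n : ℤ) : ℤ√(-1 - 4 * u)) * (⟨1, 1⟩ * ⟨-2 * u, 1⟩ ^ n) := by
  have hsq : (⟨1, 1⟩ : ℤ√(-1 - 4 * u)) ^ 2 = 2 * ⟨-2 * u, 1⟩ := by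
    rw [pow_two]
    ext <;> simp only [Zsqrtd.re_mul, Zsqrtd.im_mul, Zsqrtd.re_ofNat, Zsqrtd.im_ofNat,
      Nat.cast_ofNat] <;> ring
  rw [pow_succ, pow_mul, hsq]
  push_cast
  ring

lemma neg_two_mul_add_sqrtd_pow_two_mul (k : ℕ) : (⟨-2 * u, 1⟩ : ℤ√(-1 - 4 * u)) ^ (2 * k) =
    (((-1) ^ k : ℤ) : ℤ√(-1 - 4 * u)) * (1 + 4 * (u * ⟨1 - u, 1⟩)) ^ k := by
  have hsq : (⟨-2 * u, 1⟩ : ℤ√(-1 - 4 * u)) ^ 2 = -1 * (1 + 4 * (u * ⟨1 - u, 1⟩)) := by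
    rw [pow_two]
    ext <;> simp only [Zsqrtd.re_mul, Zsqrtd.im_mul, Zsqrtd.re_neg, Zsqrtd.im_neg, Zsqrtd.re_add,
      Zsqrtd.im_add, Zsqrtd.re_one, Zsqrtd.im_one, Zsqrtd.re_ofNat, Zsqrtd.im_ofNat,
      Zsqrtd.re_intCast, Zsqrtd.im_intCast, Nat.cast_ofNat] <;> ring
  rw [pow_mul, hsq, mul_pow]
  push_cast
  rfl

variable {u}

lemma not_isUnit_re_one_add_sqrtd_mul_pow_of_even (hu : u ≠ 0) {k : ℕ} (hk : k ≠ 0) :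
    ¬ IsUnit ((⟨1, 1⟩ : ℤ√(-1 - 4 * u)) * ⟨-2 * u, 1⟩ ^ (2 * k)).re := by
  -- Up to sign the real part is `1 - 5 * 2 ^ (e + 2) * j * u ^ 2` modulo `2 ^ (e + 3) * u ^ 2`.
  obtain ⟨e, j, hj, rfl⟩ := Nat.exists_eq_two_pow_mul_odd hk
  rw [neg_two_mul_add_sqrtd_pow_two_mul, mul_left_comm, Zsqrtd.re_smul]
  intro hunit
  have hdvd := two_pow_mul_sq_dvd_re_mul_one_add_four_mul_pow_sub u
    (⟨1, 1⟩ : ℤ√(-1 - 4 * u)) ⟨1 - u, 1⟩ j e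
  have hre : ((⟨1, 1⟩ : ℤ√(-1 - 4 * u)) * ⟨1 - u, 1⟩).re = -5 * u := by
    rw [Zsqrtd.re_mul]; ring
  rw [hre] at hdvd
  rcases Int.isUnit_iff.1 (isUnit_of_mul_isUnit_right hunit) with h | h <;> rw [h] at hdvd
  · have : 2 ^ (e + 2) * u ^ 2 * 2 ∣ 2 ^ (e + 2) * u ^ 2 * (5 * j) := by
      convert hdvd using 1 <;> ring
    have : (2 : ℤ) ∣ 5 * j := Int.dvd_of_mul_dvd_mul_left (by positivity) this
    grind
  · have : (4 : ℤ) ∣ -2 + 4 * (2 ^ e * 5 * j * u ^ 2) :=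
      .trans ⟨2 ^ (e + 1) * u ^ 2, by ring⟩ (hdvd.trans (dvd_of_eq (by ring)))
    omega

lemma not_isUnit_re_one_add_sqrtd_mul_pow_of_odd (hu : 1 ≤ u) (k : ℕ) :
    ¬ IsUnit ((⟨1, 1⟩ : ℤ√(-1 - 4 * u)) * ⟨-2 * u, 1⟩ ^ (2 * k + 1)).re := by
  rw [pow_succ', ← mul_assoc, neg_two_mul_add_sqrtd_pow_two_mul, mul_left_comm, Zsqrtd.re_smul]
  intro hunit
  have hre : ((⟨1, 1⟩ : ℤ√(-1 - 4 * u)) * ⟨-2 * u, 1⟩).re = -1 - 6 * u := by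
    rw [Zsqrtd.re_mul]; ring
  have hmod := (re_mul_modEq _ _).trans ((re_pow_modEq (1 + 4 * (u * ⟨1 - u, 1⟩)) k).mul_left
    ((⟨1, 1⟩ : ℤ√(-1 - 4 * u)) * ⟨-2 * u, 1⟩).re)
  obtain ⟨c, hc⟩ := four_mul_dvd_re_mul_one_add_four_mul_pow_sub u
    ((⟨1, 1⟩ : ℤ√(-1 - 4 * u)) * ⟨-2 * u, 1⟩) ⟨1 - u, 1⟩ k
  rw [hre] at hc hmod
  rcases Int.isUnit_iff.1 (isUnit_of_mul_isUnit_right hunit) with h | h <;> rw [h] at hc hmod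
  · obtain rfl : u = 1 := by
      have : u * (2 * c - 3) = 1 := by linarith
      have := Int.eq_one_or_neg_one_of_mul_eq_one this
      omega
    have : (1 : ℤ) ≡ -7 [ZMOD 5] := by simpa using hmod
    exact absurd this (by decide)
  · have : u * (2 * c) = u * 3 := by linarith
    have := mul_left_cancel₀ (by omega) this
    omega

theorem eq_zero_of_isUnit_re_one_add_sqrtd_mul_pow (hu : 1 ≤ u) {n : ℕ}
    (h : IsUnit ((⟨1, 1⟩ : ℤ√(-1 - 4 * u)) * ⟨-2 * u, 1⟩ ^ n).re) : n = 0 := by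
  rcases Nat.even_or_odd' n with ⟨k, rfl | rfl⟩
  · by_contra hk
    exact not_isUnit_re_one_add_sqrtd_mul_pow_of_even (by omega) (by omega) h
  · exact absurd h (not_isUnit_re_one_add_sqrtd_mul_pow_of_odd hu k)

theorem eq_zero_of_re_pow_eq_two_pow (hu : 1 ≤ u) {t : ℤ} (ht : Odd t) {n : ℕ}
    (h : ((⟨t, 1⟩ : ℤ√(t ^ 2 - 2 * (2 * u + 1))) ^ (2 * n + 1)).re = 2 ^ n) : n = 0 := by
  have ht_unit : IsUnit t := by
    have hdvd : t ∣ 2 ^ n := h ▸ re_dvd_re_pow_of_odd (⟨t, 1⟩ : ℤ√_) (odd_two_mul_add_one n)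
    exact (Int.isCoprime_two_right.2 ht).pow_right.isUnit_of_dvd' dvd_rfl hdvd
  have hd : t ^ 2 - 2 * (2 * u + 1) = -1 - 4 * u := by
    rw [Int.isUnit_sq ht_unit]; ring
  rw [hd] at h
  apply eq_zero_of_isUnit_re_one_add_sqrtd_mul_pow hu
  have hre := congrArg Zsqrtd.re (one_add_sqrtd_pow u n)
  rw [Zsqrtd.re_smul] at hre
  have hneg := re_neg_mk_pow (d := -1 - 4 * u) 1 1 (2 * n + 1)
  rw [(odd_two_mul_add_one n).neg_one_pow] at hneg
  have h2n : (2 : ℤ) ^ n ≠ 0 := by positivity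
  rw [Int.isUnit_iff]
  rcases Int.isUnit_iff.1 ht_unit with rfl | rfl
  · exact .inl (mul_left_cancel₀ h2n (by linarith))
  · exact .inr (mul_left_cancel₀ h2n (by linarith))

end OneAddSqrtd

lemma exists_pow_eq_pow_mul_of_sq_eq_mul_pow {R : Type*} [CommRing R] [IsDomain R]
    [IsIntegrallyClosed R] {a b d : R} (hb : b ≠ 0) {n : ℕ} (h : a ^ 2 = d * b ^ (2 * n + 1)) :
    ∃ c : R, c ^ (2 * n + 1) = d ^ n * a := by
  have hdvd : b ^ n ∣ a := by
    rw [← IsIntegrallyClosed.pow_dvd_pow_iff two_ne_zero, h]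
    exact ⟨d * b, by ring⟩
  obtain ⟨c, rfl⟩ := hdvd
  have hc : c ^ 2 = d * b :=
    mul_left_cancel₀ (pow_ne_zero (2 * n) hb) (by linear_combination h)
  exact ⟨c, by rw [pow_succ, pow_mul, hc]; ring⟩

lemma exists_pow_eq_of_associated_pow {M : Type*} [CommMonoid M] {k : ℕ}
    (hM : ∀ w : Mˣ, w ^ k = 1) {q : ℕ} (hq : q.Coprime k) {a b : M}
    (h : Associated (b ^ q) a) : ∃ c : M, c ^ q = a := by
  obtain ⟨w, rfl⟩ := h
  obtain ⟨j, hj⟩ := exists_pow_eq_self_of_coprime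
    (hq.coprime_dvd_right (orderOf_dvd_of_pow_eq_one (hM w)))
  exact ⟨b * (w ^ j : Mˣ), by rw [mul_pow, ← Units.val_pow_eq_pow_val, pow_right_comm, hj]⟩

lemma exists_classGroup_orderOf_eq {R : Type*} [CommRing R] [IsDedekindDomain R]
    {n : ℕ} (hn : 0 < n) {a b c : R} (ha : a ≠ 0) (hab : IsCoprime a b) (h : a * b = c ^ n)
    (hpow : ∀ q : ℕ, q.Prime → q ∣ n → ∀ r : R, ¬ Associated (r ^ q) a) :
    ∃ x : ClassGroup R, orderOf x = n := by
  have hspan : Ideal.span {a} * Ideal.span {b} = Ideal.span {c} ^ n := by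
    rw [Ideal.span_singleton_mul_span_singleton, h, Ideal.span_singleton_pow]
  obtain ⟨I, hI⟩ := exists_eq_pow_of_mul_eq_pow_of_coprime
    ((Ideal.isCoprime_span_singleton_iff a b).2 hab) hspan
  have hI0 : I ≠ 0 := by
    rintro rfl
    rw [zero_pow hn.ne'] at hI
    exact ha (Ideal.span_singleton_eq_bot.1 hI)
  have hI0 : I ∈ nonZeroDivisors (Ideal R) := mem_nonZeroDivisors_of_ne_zero hI0
  have mk_pow_eq_one_iff (k : ℕ) : ClassGroup.mk0 ⟨I, hI0⟩ ^ k = 1 ↔ (I ^ k).IsPrincipal := by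
    rw [← ClassGroup.mk0_eq_one_iff (pow_mem hI0 k), ← map_pow]; rfl
  refine ⟨ClassGroup.mk0 ⟨I, hI0⟩, orderOf_eq_of_pow_and_pow_div_prime hn
    ((mk_pow_eq_one_iff n).2 ⟨a, hI.symm⟩) fun q hq hqn hone ↦ ?_⟩
  obtain ⟨r, hr : I ^ (n / q) = Ideal.span {r}⟩ := (mk_pow_eq_one_iff _).1 hone
  refine hpow q hq hqn r (Ideal.span_singleton_eq_span_singleton.1 ?_)
  rw [← Ideal.span_singleton_pow, ← hr, ← pow_mul, Nat.div_mul_cancel hqn, hI]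

section Adjoin

open IntermediateField

lemma exists_eq_add_mul_of_mem_adjoin {F E : Type*} [Field F] [Field E] [Algebra F E] {d : F}
    {θ : E} (hθ : θ ^ 2 = algebraMap F E d) {x : E} (hx : x ∈ F⟮θ⟯) :
    ∃ a b : F, x = algebraMap F E a + algebraMap F E b * θ := by
  have hint : IsIntegral F θ := .of_pow two_pos (hθ ▸ isIntegral_algebraMap)
  rw [← mem_toSubalgebra, adjoin_simple_toSubalgebra_of_isAlgebraic hint.isAlgebraic] at hx
  induction hx using Algebra.adjoin_induction with
  | mem x hx => exact ⟨0, 1, by simpa using hx⟩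
  | algebraMap a => exact ⟨a, 0, by simp⟩
  | add x y _ _ hx hy =>
    obtain ⟨a, b, rfl⟩ := hx
    obtain ⟨a', b', rfl⟩ := hy
    exact ⟨a + a', b + b', by simp only [map_add]; ring⟩
  | mul x y _ _ hx hy =>
    obtain ⟨a, b, rfl⟩ := hx
    obtain ⟨a', b', rfl⟩ := hy
    refine ⟨a * a' + b * b' * d, a * b' + b * a', ?_⟩
    simp only [map_add, map_mul, ← hθ]
    ring

lemma exists_intCast_eq_of_isIntegral_ratCast {E : Type*} [Field E] [CharZero E] {a : ℚ}
    (h : IsIntegral ℤ (a : E)) : ∃ k : ℤ, (k : ℚ) = a :=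
  IsIntegrallyClosed.isIntegral_iff.1 <|
    (isIntegral_algebraMap_iff (algebraMap ℚ E).injective).1 (by simpa using h)

end Adjoin

section Complex

open Complex

lemma re_eq_zero_of_sq_eq_ofReal {z : ℂ} {r : ℝ} (hr : r < 0) (h : z ^ 2 = r) : z.re = 0 := by
  have hre : z.re * z.re - z.im * z.im = r := by simpa [sq] using congrArg re h
  have him : z.re * z.im + z.im * z.re = 0 := by simpa [sq] using congrArg im h
  have him : z.re * z.im = 0 := by linarith
  rcases mul_eq_zero.1 him with h | h
  · exact h
  · rw [h] at hre
    nlinarith [mul_self_nonneg z.re]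

variable {e : ℤ} {δ : {δ : ℂ // δ * δ = e}}

lemma lift_apply_re (hδ : δ.1.re = 0) (x : ℤ√e) : (Zsqrtd.lift δ x).re = x.re := by
  simp [Zsqrtd.lift, hδ]

lemma lift_apply_im (x : ℤ√e) : (Zsqrtd.lift δ x).im = x.im * δ.1.im := by
  simp [Zsqrtd.lift]

lemma normSq_lift_apply (hδ : δ.1.re = 0) (x : ℤ√e) : normSq (Zsqrtd.lift δ x) = x.norm := by
  have him : -(δ.1.im * δ.1.im) = e := by simpa [hδ] using congrArg re δ.2
  rw [normSq_apply, lift_apply_re hδ, lift_apply_im, Zsqrtd.norm_def]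
  push_cast [← him]
  ring

end Complex

/-- `√d`, as an element of the ring of integers of `ℚ(√d)`. -/
noncomputable def sqrtInt (d : ℤ) : 𝓞 (Qsqrt d) where
  val := IntermediateField.AdjoinSimple.gen ℚ (sqrtC d)
  property := by
    refine IsIntegral.of_pow two_pos ?_
    have : IntermediateField.AdjoinSimple.gen ℚ (sqrtC d) ^ 2 = (d : Qsqrt d) :=
      Subtype.ext (sqrtC_sq d)
    exact this ▸ isIntegral_algebraMap (x := d)

lemma algebraMap_sqrtInt (d : ℤ) : algebraMap (𝓞 (Qsqrt d)) ℂ (sqrtInt d) = sqrtC d := rfl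

lemma sqrtInt_sq (d : ℤ) : sqrtInt d ^ 2 = d :=
  FaithfulSMul.algebraMap_injective (𝓞 (Qsqrt d)) ℂ (by simp [algebraMap_sqrtInt, sqrtC_sq])

section QuadraticIntegers

open Complex ComplexConjugate

lemma exists_intCast_eq_two_mul_and_sq_sub {a r : ℚ} {δ : ℂ} (hδ : δ.re = 0) (hr : δ ^ 2 = r)
    (h : IsIntegral ℤ (a + δ)) : ∃ T N : ℤ, (T : ℚ) = 2 * a ∧ (N : ℚ) = a ^ 2 - r := by
  have hconj : conj (a + δ) = a - δ := by apply Complex.ext <;> simp [hδ]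
  have h' : IsIntegral ℤ (a - δ) := hconj ▸ h.map (starRingEnd ℂ).toIntAlgHom
  have htrace : a + δ + (a - δ) = ((2 * a : ℚ) : ℂ) := by push_cast; ring
  have hnorm : (a + δ) * (a - δ) = ((a ^ 2 - r : ℚ) : ℂ) := by push_cast; rw [← hr]; ring
  obtain ⟨T, hT⟩ := exists_intCast_eq_of_isIntegral_ratCast (htrace ▸ h.add h')
  obtain ⟨N, hN⟩ := exists_intCast_eq_of_isIntegral_ratCast (hnorm ▸ h.mul h')
  exact ⟨T, N, hT, hN⟩

lemma emod_four_of_isSquare {k : ℤ} (hk : IsSquare k) : k % 4 = 0 ∨ k % 4 = 1 := by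
  obtain ⟨s, rfl⟩ := hk
  rcases Int.even_or_odd' s with ⟨r, rfl | rfl⟩ <;> grind

lemma even_of_isSquare_sq_sub_four_mul_mul {T N D : ℤ} (hD : D % 4 = 3)
    (h : IsSquare ((T ^ 2 - 4 * N) * D)) : Even T := by
  by_contra hT
  have hT : T ^ 2 % 4 = 1 := Int.sq_mod_four_eq_one_of_odd (Int.not_even_iff_odd.1 hT)
  have : (T ^ 2 - 4 * N) * D % 4 = 3 := by
    rw [Int.mul_emod, hD, show (T ^ 2 - 4 * N) % 4 = 1 by omega]; rfl
  have := emod_four_of_isSquare h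
  omega

lemma odd_of_isSquare_sq_sub_two_mul_mul {t M D : ℤ} (hD : D % 4 = 3) (hM : Odd M)
    (h : IsSquare ((t ^ 2 - 2 * M) * D)) : Odd t := by
  by_contra ht
  obtain ⟨r, rfl⟩ := Int.not_odd_iff_even.1 ht
  have : ((r + r) ^ 2 - 2 * M) % 4 = 2 := by
    obtain ⟨s, rfl⟩ := hM
    grind
  have : ((r + r) ^ 2 - 2 * M) * D % 4 = 2 := by
    rw [Int.mul_emod, hD, this]; rfl
  have := emod_four_of_isSquare h
  omega

lemma pow_four_eq_one_of_sq_eq_two_mul_sub_one {R : Type*} [CommRing R] [IsDomain R] {t : ℤ}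
    (ht : t ^ 2 ≤ 1) {w : R} (hw : w ^ 2 = 2 * t * w - 1) : w ^ 4 = 1 := by
  obtain ⟨ht1, ht2⟩ := abs_le.1 ((sq_le_one_iff_abs_le_one t).1 ht)
  obtain rfl | rfl | rfl : t = -1 ∨ t = 0 ∨ t = 1 := by omega
  · have : (w + 1) ^ 2 = 0 := by push_cast at hw; linear_combination hw
    rw [eq_neg_of_add_eq_zero_left (pow_eq_zero_iff two_ne_zero |>.1 this)]
    norm_num
  · push_cast at hw; linear_combination (w ^ 2 - 1) * hw
  · have : (w - 1) ^ 2 = 0 := by push_cast at hw; linear_combination hw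
    rw [sub_eq_zero.1 (pow_eq_zero_iff two_ne_zero |>.1 this), one_pow]

variable {D : ℤ}

lemma sqrtC_re_eq_zero (hD : D < 0) : (sqrtC D).re = 0 :=
  re_eq_zero_of_sq_eq_ofReal (r := D) (by exact_mod_cast hD) (by simpa using sqrtC_sq D)

-- `IsSquare (e * D)` records that `δ ∈ ℚ√D`; it is what decides the parity of `t` later on.
lemma exists_lift_eq (hD : D < 0) (hD4 : D % 4 = 3) (z : 𝓞 (Qsqrt D)) :
    ∃ (e t : ℤ) (δ : {δ : ℂ // δ * δ = e}), δ.1.re = 0 ∧ IsSquare (e * D) ∧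
      Zsqrtd.lift δ ⟨t, 1⟩ = algebraMap (𝓞 (Qsqrt D)) ℂ z := by
  have hz : IsIntegral ℤ (algebraMap (𝓞 (Qsqrt D)) ℂ z) := z.isIntegral.algebraMap
  obtain ⟨a, b, hab⟩ := exists_eq_add_mul_of_mem_adjoin (d := (D : ℚ))
    (by simpa using sqrtC_sq D) (z : Qsqrt D).2
  change algebraMap (𝓞 (Qsqrt D)) ℂ z = a + b * sqrtC D at hab
  have hδre : (b * sqrtC D).re = 0 := by
    rw [← ofReal_ratCast, re_ofReal_mul, sqrtC_re_eq_zero hD, mul_zero]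
  have hδsq : (b * sqrtC D) ^ 2 = ((b ^ 2 * D : ℚ) : ℂ) := by
    push_cast; rw [← sqrtC_sq]; ring
  obtain ⟨T, N, hT, hN⟩ := exists_intCast_eq_two_mul_and_sq_sub hδre hδsq (hab ▸ hz)
  have hTeven : Even T := by
    refine even_of_isSquare_sq_sub_four_mul_mul hD4 (N := N) (Rat.isSquare_intCast_iff.1 ?_)
    exact ⟨2 * b * D, by push_cast; rw [hT, hN]; ring⟩
  obtain ⟨t, rfl⟩ := hTeven
  obtain rfl : (t : ℚ) = a := by push_cast at hT; linarith
  have he : ((t ^ 2 - N : ℤ) : ℚ) = b ^ 2 * D := by push_cast; linarith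
  refine ⟨t ^ 2 - N, t, ⟨b * sqrtC D, ?_⟩, hδre, Rat.isSquare_intCast_iff.1 ?_, ?_⟩
  · rw [← sq, hδsq, ← he, Rat.cast_intCast]
  · exact ⟨b * D, by rw [Int.cast_mul, he]; ring⟩
  · simp [hab, Zsqrtd.lift]

lemma unit_pow_four_eq_one (hD : D < 0) (hD4 : D % 4 = 3) (w : (𝓞 (Qsqrt D))ˣ) : w ^ 4 = 1 := by
  have hinj := FaithfulSMul.algebraMap_injective (𝓞 (Qsqrt D)) ℂ
  obtain ⟨e, t, δ, hδ, he, hw⟩ := exists_lift_eq hD hD4 w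
  obtain ⟨e', t', δ', hδ', -, hw'⟩ := exists_lift_eq hD hD4 (w⁻¹ : (𝓞 (Qsqrt D))ˣ)
  have hnorm : (⟨t, 1⟩ : ℤ√e).norm * (⟨t', 1⟩ : ℤ√e').norm = 1 := by
    have := congrArg (normSq ∘ algebraMap (𝓞 (Qsqrt D)) ℂ) w.mul_inv
    simp only [Function.comp_apply, map_mul, map_one, ← hw, ← hw', normSq_lift_apply, hδ, hδ']
      at this
    exact_mod_cast this
  have he0 : e ≤ 0 := nonpos_of_mul_nonneg_left he.nonneg hD
  have hnorm1 : (⟨t, 1⟩ : ℤ√e).norm = 1 :=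
    Int.eq_one_of_mul_eq_one_right (Zsqrtd.norm_nonneg he0 _) hnorm
  have hquad : (⟨t, 1⟩ : ℤ√e) ^ 2 = 2 * t * ⟨t, 1⟩ - (⟨t, 1⟩ : ℤ√e).norm := by
    rw [Zsqrtd.norm_eq_mul_conj, sq]
    ext <;> simp only [Zsqrtd.re_mul, Zsqrtd.im_mul, Zsqrtd.re_sub, Zsqrtd.im_sub, Zsqrtd.re_star,
      Zsqrtd.im_star, Zsqrtd.re_ofNat, Zsqrtd.im_ofNat, Zsqrtd.re_intCast, Zsqrtd.im_intCast,
      Nat.cast_ofNat] <;> ring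
  rw [hnorm1] at hquad
  have hw2 : (w : 𝓞 (Qsqrt D)) ^ 2 = 2 * t * w - 1 := by
    apply hinj
    have := congrArg (Zsqrtd.lift δ) hquad
    simp only [map_sub, map_mul, map_pow, map_intCast, map_ofNat, hw, Int.cast_one, map_one] at this
    simpa only [map_sub, map_mul, map_pow, map_intCast, map_ofNat, map_one] using this
  have ht : t ^ 2 ≤ 1 := by rw [Zsqrtd.norm_def] at hnorm1; linarith
  exact Units.ext (pow_four_eq_one_of_sq_eq_two_mul_sub_one ht hw2)

end QuadraticIntegers

section OneSubTwoMulPow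

lemma one_sub_two_mul_pow_neg {M : ℤ} (hM : 1 ≤ M) (q : ℕ) : 1 - 2 * M ^ q < 0 := by
  have := one_le_pow₀ (n := q) hM
  omega

lemma one_sub_two_mul_pow_emod_four {M : ℤ} (hM : Odd M) (q : ℕ) : (1 - 2 * M ^ q) % 4 = 3 := by
  obtain ⟨v, hv⟩ := hM.pow (n := q)
  omega

lemma isCoprime_one_sub_add_one_sub_sub {R : Type*} [CommRing R] {x s : R} (hx : IsCoprime 2 x)
    (hs : s ^ 2 = 1 - 2 * x) : IsCoprime (1 - x + s) (1 - x - s) := by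
  have hprod : (1 - x + s) * (1 - x - s) = x ^ 2 := by linear_combination -hs
  have hsum : 1 - x + s + (1 - x - s) * 1 = 2 * (1 - x) := by ring
  have : IsCoprime (2 * (1 - x)) (x ^ 2) := (hx.mul_left ⟨1, 1, by ring⟩).pow_right
  rw [← hprod, ← hsum] at this
  exact this.of_mul_right_right.of_add_mul_left_left

variable {M D : ℤ} {n : ℕ}

lemma eq_zero_of_pow_eq_two_pow_mul_one_add_sqrtInt (hM : 3 ≤ M) (hModd : Odd M)
    (hD : D = 1 - 2 * M ^ (2 * n + 1)) {c : 𝓞 (Qsqrt D)}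
    (hc : c ^ (2 * n + 1) = 2 ^ n * (1 + sqrtInt D)) : n = 0 := by
  have hD0 : D < 0 := hD ▸ one_sub_two_mul_pow_neg (by omega) _
  have hD4 : D % 4 = 3 := hD ▸ one_sub_two_mul_pow_emod_four hModd _
  obtain ⟨e, t, δ, hδ, he, hlift⟩ := exists_lift_eq hD0 hD4 c
  let θ : {θ : ℂ // θ * θ = D} := ⟨sqrtC D, by rw [← sq, sqrtC_sq]⟩
  have hθ : θ.1.re = 0 := sqrtC_re_eq_zero hD0
  have hpow : Zsqrtd.lift δ (⟨t, 1⟩ ^ (2 * n + 1)) =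
      Zsqrtd.lift θ ((2 ^ n : ℤ) * (⟨1, 1⟩ : ℤ√D)) := by
    rw [map_pow, hlift, ← map_pow, hc]
    rw [map_mul, map_mul, map_pow, map_add, map_intCast, map_ofNat, map_one, algebraMap_sqrtInt]
    simp [θ, Zsqrtd.lift]
  have hre : ((⟨t, 1⟩ : ℤ√e) ^ (2 * n + 1)).re = 2 ^ n := by
    have := congrArg Complex.re hpow
    rw [lift_apply_re hδ, lift_apply_re hθ, Zsqrtd.re_smul, mul_one] at this
    exact_mod_cast this
  have hnorm : (⟨t, 1⟩ : ℤ√e).norm = 2 * M := by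
    have h := congrArg Complex.normSq hpow
    rw [normSq_lift_apply hδ, normSq_lift_apply hθ, Int.cast_inj, Zsqrtd.norm_mul,
      Zsqrtd.norm_intCast] at h
    refine (odd_two_mul_add_one n).pow_injective
      ((map_pow Zsqrtd.normMonoidHom _ _).symm.trans (h.trans ?_))
    rw [Zsqrtd.norm_def, hD]
    ring
  obtain rfl : e = t ^ 2 - 2 * M := by rw [Zsqrtd.norm_def] at hnorm; linarith
  have ht : Odd t := odd_of_isSquare_sq_sub_two_mul_mul hD4 hModd he
  obtain ⟨u, rfl⟩ := hModd
  exact eq_zero_of_re_pow_eq_two_pow (by omega) ht hre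

lemma not_associated_pow_one_sub_pow_add_sqrtInt (hM : 3 ≤ M) (hModd : Odd M) {q : ℕ}
    (hq : Odd q) (hq1 : q ≠ 1) (hD : D = 1 - 2 * M ^ q) (b : 𝓞 (Qsqrt D)) :
    ¬ Associated (b ^ q) (1 - (M : 𝓞 (Qsqrt D)) ^ q + sqrtInt D) := by
  intro h
  have hD0 : D < 0 := hD ▸ one_sub_two_mul_pow_neg (by omega) _
  have hD4 : D % 4 = 3 := hD ▸ one_sub_two_mul_pow_emod_four hModd _
  obtain ⟨c, hc⟩ := exists_pow_eq_of_associated_pow (unit_pow_four_eq_one hD0 hD4)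
    ((Nat.coprime_two_right.2 hq).pow_right 2) h
  have hsq : (1 + sqrtInt D) ^ 2 = 2 * c ^ q := by
    rw [hc]
    have hDR := congrArg (Int.cast : ℤ → 𝓞 (Qsqrt D)) hD
    push_cast at hDR
    linear_combination sqrtInt_sq D + hDR
  have hne : 1 + sqrtInt D ≠ 0 := fun h0 ↦ by
    simpa [algebraMap_sqrtInt, sqrtC_re_eq_zero hD0] using
      congrArg (Complex.re ∘ algebraMap (𝓞 (Qsqrt D)) ℂ) h0
  have hc0 : c ≠ 0 := by
    rintro rfl
    rw [zero_pow hq.pos.ne', mul_zero] at hsq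
    exact hne (pow_eq_zero_iff two_ne_zero |>.1 hsq)
  obtain ⟨n, rfl⟩ := hq
  obtain ⟨y, hy⟩ := exists_pow_eq_pow_mul_of_sq_eq_mul_pow hc0 hsq
  have := eq_zero_of_pow_eq_two_pow_mul_one_add_sqrtInt hM hModd hD hy
  omega

end OneSubTwoMulPow

theorem finitely_many_primes_not_dvd_classNumber_general (m : ℤ) (hm : 3 ≤ m) (hmodd : Odd m)
    (n : ℕ) (hn : Odd n) : n ∣ NumberField.classNumber (Qsqrt (1 - 2 * m ^ n)) := by
  set D := 1 - 2 * m ^ n with hD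
  have hs : sqrtInt D ^ 2 = 1 - 2 * (m : 𝓞 (Qsqrt D)) ^ n := by
    rw [sqrtInt_sq, hD]; push_cast; rfl
  have hprod :
      (1 - (m : 𝓞 (Qsqrt D)) ^ n + sqrtInt D) * (1 - m ^ n - sqrtInt D) = (m ^ 2) ^ n := by
    linear_combination -hs
  have hcop : IsCoprime (1 - (m : 𝓞 (Qsqrt D)) ^ n + sqrtInt D) (1 - m ^ n - sqrtInt D) := by
    refine isCoprime_one_sub_add_one_sub_sub ?_ hs
    simpa using (Int.isCoprime_two_left.2 (hmodd.pow (n := n))).map (Int.castRingHom (𝓞 (Qsqrt D)))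
  have hm0 : (m : 𝓞 (Qsqrt D)) ≠ 0 := by exact_mod_cast (by omega : m ≠ 0)
  have hne : 1 - (m : 𝓞 (Qsqrt D)) ^ n + sqrtInt D ≠ 0 :=
    left_ne_zero_of_mul (hprod ▸ pow_ne_zero n (pow_ne_zero 2 hm0))
  obtain ⟨x, hx⟩ := exists_classGroup_orderOf_eq hn.pos hne hcop hprod fun q hq hqn b ↦ by
    obtain ⟨k, rfl⟩ := hqn
    have hk : Odd k := (Nat.odd_mul.1 hn).2
    rw [mul_comm q k, pow_mul] at hD ⊢
    simpa using not_associated_pow_one_sub_pow_add_sqrtInt (M := m ^ k)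
      (hm.trans (le_self_pow₀ (by omega) hk.pos.ne')) hmodd.pow (Nat.odd_mul.1 hn).1 hq.ne_one hD b
  exact hx ▸ orderOf_dvd_card

/-- For an odd integer `m ≥ 3`, for all but finitely many primes `p` the class number of
`ℚ(√(1 - 2 m ^ p))` is divisible by `p`. -/
theorem finitely_many_primes_not_dvd_classNumber
    (m : ℤ) (hm : 3 ≤ m) (hmodd : Odd m) :
    {p : ℕ | p.Prime ∧
      ¬ p ∣ NumberField.classNumber (Qsqrt (1 - 2 * m ^ p))}.Finite :=
  (Set.finite_singleton 2).subset fun p ⟨hp, hdvd⟩ ↦ by_contra fun hp2 ↦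
    hdvd (finitely_many_primes_not_dvd_classNumber_general m hm hmodd p (hp.odd_of_ne_two hp2))
end

section
/- Let m ≥ 3 be an odd integer. The set of square-free negative integers d such that d is the square-free part of 1 − 2m^p for some prime p that divides the class number of ℚ(√(1 − 2m^p)) is infinite; i.e., for fixed m the collection of distinct imaginary quadratic fields ℚ(√(1 − 2m^p)) with p dividing the class number of ℚ(√(1 − 2m^p)) is infinite. -/
open Polynomial NumberField

/-!
Write `D = 1 - 2 m ^ p` with `p > 3` prime, and suppose that `p` does not divide the class number
of `ℚ(√D)`. The factors of `(1 - m ^ p + √D) (1 - m ^ p - √D) = m ^ (2 p)` are coprime and the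
order of every unit divides `12`, so `1 - m ^ p + √D = g ^ p` for an algebraic integer `g` of
`ℚ(√D)`. Since `(1 + √D) ^ 2 = 2 g ^ p`, the quotient `δ = (1 + √D) / g ^ ((p - 1) / 2)` satisfies
`δ ^ 2 = 2 g`, hence is an algebraic integer, and `δ ^ p = 2 ^ ((p - 1) / 2) (1 + √D)`. Its norm is
`2 m`. Its trace `T` is twice an odd number, because `(T ^ 2 - 8 m) D` is a square, and divides the
trace `2 ^ ((p + 1) / 2)` of `δ ^ p`, so `T = 2 e` with `e = ±1`. As `T ^ p` is congruent to the
trace of `δ ^ p` modulo `p` times the norm of `δ`, this gives `2 ^ ((p - 1) / 2) ≡ e` modulo `p m`.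
Modulo `p` this forces `e` to be the Legendre symbol of `2`, which depends only on `p` modulo `8`;
modulo `m` the congruence is then impossible for `p ≡ 7 [MOD 8]` if `2` has even order modulo `m`,
and for `p ≡ 5 [MOD 8]` if it has odd order. By Dirichlet's theorem such `p` are unbounded, and so
are the class numbers they divide.
-/

section General

lemma exists_associated_pow_of_mul_eq_pow_of_coprime_classGroup {R : Type*} [CommRing R]
    [IsDedekindDomain R] [Fintype (ClassGroup R)] {n : ℕ}
    (hn : n.Coprime (Fintype.card (ClassGroup R))) {x y z : R} (hxy : IsCoprime x y)
    (h : x * y = z ^ n) : ∃ g : R, Associated (g ^ n) x := by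
  have h_ideal : Ideal.span {x} * Ideal.span {y} = Ideal.span {z} ^ n := by
    rw [Ideal.span_singleton_mul_span_singleton, h, Ideal.span_singleton_pow]
  obtain ⟨I, hI⟩ := exists_eq_pow_of_mul_eq_pow_of_coprime
    ((Ideal.isCoprime_span_singleton_iff x y).2 hxy) h_ideal
  obtain ⟨g, rfl⟩ : I.IsPrincipal :=
    Ideal.IsPrincipal.of_isPrincipal_pow_of_coprime hn (hI ▸ ⟨⟨x, rfl⟩⟩)
  refine ⟨g, Ideal.span_singleton_eq_span_singleton.1 ?_⟩
  rw [hI, ← Ideal.span_singleton_pow]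

lemma pow_twelve_eq_one_of_sq_eq {R : Type*} [CommRing R] [IsReduced R] {u : R} {T : ℤ}
    (hT : T ^ 2 ≤ 4) (h : u ^ 2 = T * u - 1) : u ^ 12 = 1 := by
  obtain ⟨hT_lower, hT_upper⟩ := abs_le.1 (abs_le_of_sq_le_sq (a := T) (b := 2) (by lia) (by lia))
  interval_cases T <;> push_cast at h
  · have hu : u + 1 = 0 := pow_eq_zero_iff two_ne_zero |>.1 (by linear_combination h)
    rw [eq_neg_of_add_eq_zero_left hu]
    exact Even.neg_one_pow (by decide)
  · have hu : u ^ 3 = 1 := by linear_combination (u - 1) * h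
    linear_combination (u ^ 9 + u ^ 6 + u ^ 3 + 1) * hu
  · have hu : u ^ 2 = -1 := by linear_combination h
    linear_combination (u ^ 10 - u ^ 8 + u ^ 6 - u ^ 4 + u ^ 2 - 1) * hu
  · have hu : u ^ 3 = -1 := by linear_combination (u + 1) * h
    linear_combination (u ^ 9 - u ^ 6 + u ^ 3 - 1) * hu
  · have hu : u - 1 = 0 := pow_eq_zero_iff two_ne_zero |>.1 (by linear_combination h)
    rw [sub_eq_zero.1 hu, one_pow]

lemma div_pow_sq_of_sq_eq_mul_pow {L : Type*} [Field L] {a c g : L} {k : ℕ} (hg : g ≠ 0)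
    (h : a ^ 2 = c * g ^ (2 * k + 1)) : (a / g ^ k) ^ 2 = c * g := by
  rw [div_pow, h]
  field_simp
  ring

lemma div_pow_pow_of_sq_eq_mul_pow {L : Type*} [Field L] {a c g : L} {k : ℕ} (hg : g ≠ 0)
    (h : a ^ 2 = c * g ^ (2 * k + 1)) : (a / g ^ k) ^ (2 * k + 1) = c ^ k * a := by
  rw [pow_succ, pow_mul, div_pow_sq_of_sq_eq_mul_pow hg h, mul_pow]
  field_simp

lemma neg_one_eq_one_of_pow_eq_neg_one_of_odd_orderOf {M : Type*} [Monoid M] [HasDistribNeg M]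
    {g : M} {n : ℕ} (hg : Odd (orderOf g)) (h : g ^ n = -1) : (-1 : M) = 1 := by
  rw [← hg.neg_one_pow, ← h, pow_right_comm, pow_orderOf_eq_one, one_pow]

lemma exists_sq_mul_squarefree (D : ℤ) : ∃ (n : ℕ) (d : ℤ), D = n ^ 2 * d ∧ Squarefree d := by
  obtain ⟨k, hk⟩ := D.eq_nat_or_neg
  obtain ⟨d, n, rfl, hd⟩ := Nat.sq_mul_squarefree k
  rcases hk with rfl | rfl
  · exact ⟨n, d, by push_cast; rfl, Int.squarefree_natCast.2 hd⟩
  · exact ⟨n, -d, by push_cast; ring, Int.squarefree_natAbs.1 (by simpa using hd)⟩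

lemma coprime_twelve_of_prime {p : ℕ} (hp : p.Prime) (hp3 : 3 < p) : p.Coprime 12 := by
  refine hp.coprime_iff_not_dvd.2 fun (h : p ∣ 2 ^ 2 * 3) => ?_
  rcases hp.dvd_mul.1 h with h_four | h_three
  · have := Nat.le_of_dvd two_pos (hp.dvd_of_dvd_pow h_four)
    lia
  · have := Nat.le_of_dvd three_pos h_three
    lia

end General

section AlgebraicIntegers

variable {L : Type*} [Field L] [CharZero L]

lemma dvd_of_intCast_eq_mul_of_isIntegral {a b : ℤ} {r : L} (hr : IsIntegral ℤ r)
    (h : (b : L) = a * r) : a ∣ b := by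
  rcases eq_or_ne a 0 with rfl | ha
  · simpa using h
  have hr_rat : r = ((b / a : ℚ) : L) := by
    have : (a : L) ≠ 0 := by exact_mod_cast ha
    push_cast
    rw [h, mul_div_cancel_left₀ _ this]
  obtain ⟨n, rfl⟩ := hr.exists_int_iff_exists_rat.1 ⟨_, hr_rat⟩
  exact ⟨n, by exact_mod_cast h⟩

variable {x y : L} {T V : ℤ}

lemma add_dvd_pow_add_pow_of_isIntegral (hx : IsIntegral ℤ x) (hy : IsIntegral ℤ y)
    (hT : x + y = T) {n : ℕ} (hn : Odd n) (hV : x ^ n + y ^ n = V) : T ∣ V := by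
  obtain ⟨r, hr⟩ := hn.add_dvd_pow_add_pow
    (⟨x, hx⟩ : integralClosure ℤ L) ⟨y, hy⟩
  refine dvd_of_intCast_eq_mul_of_isIntegral r.2 ?_
  rw [← hT, ← hV]
  exact congrArg Subtype.val hr

lemma prime_mul_dvd_add_pow_sub_of_isIntegral (hx : IsIntegral ℤ x) (hy : IsIntegral ℤ y)
    (hT : x + y = T) {N : ℤ} (hN : x * y = N) {p : ℕ} (hp : p.Prime)
    (hV : x ^ p + y ^ p = V) : p * N ∣ T ^ p - V := by
  obtain ⟨r, hr⟩ := exists_add_pow_prime_eq hp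
    (⟨x, hx⟩ : integralClosure ℤ L) ⟨y, hy⟩
  refine dvd_of_intCast_eq_mul_of_isIntegral r.2 ?_
  have hr' : (x + y) ^ p = x ^ p + y ^ p + p * x * y * r := congrArg Subtype.val hr
  push_cast
  rw [← hT, ← hV, ← hN, hr']
  ring

end AlgebraicIntegers

section RingOfIntegers

variable {K : IntermediateField ℚ ℂ}

lemma isIntegral_algebraMap_ringOfIntegers (x : 𝓞 K) : IsIntegral ℤ (algebraMap (𝓞 K) ℂ x) :=
  x.isIntegral.algebraMap

lemma algebraMap_ringOfIntegers_mem (x : 𝓞 K) : algebraMap (𝓞 K) ℂ x ∈ K :=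
  (x : K).2

lemma exists_ringOfIntegers_algebraMap_eq {x : ℂ} (hx : x ∈ K) (hxi : IsIntegral ℤ x) :
    ∃ y : 𝓞 K, algebraMap (𝓞 K) ℂ y = x :=
  ⟨⟨⟨x, hx⟩, (isIntegral_algebraMap_iff (algebraMap K ℂ).injective).1 hxi⟩, rfl⟩

end RingOfIntegers

section ImaginaryQuadratic

variable {D : ℤ}

lemma sqrtC_mem_Qsqrt (D : ℤ) : sqrtC D ∈ Qsqrt D :=
  IntermediateField.mem_adjoin_simple_self ℚ (sqrtC D)

lemma isIntegral_int_sqrtC (D : ℤ) : IsIntegral ℤ (sqrtC D) := by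
  refine IsIntegral.of_pow two_pos ?_
  rw [sqrtC_sq]
  exact isIntegral_algebraMap (x := D)

lemma exists_rat_add_rat_mul_sqrtC_of_mem_Qsqrt {x : ℂ} (hx : x ∈ Qsqrt D) :
    ∃ a b : ℚ, x = a + b * sqrtC D := by
  rw [Qsqrt, ← IntermediateField.mem_toSubalgebra,
    IntermediateField.adjoin_simple_toSubalgebra_of_isAlgebraic (isIntegral_sqrtC D).isAlgebraic]
    at hx
  induction hx using Algebra.adjoin_induction with
  | mem x hx => exact ⟨0, 1, by simpa using hx⟩
  | algebraMap a => exact ⟨a, 0, by simp⟩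
  | add x y _ _ ihx ihy =>
    obtain ⟨a, b, rfl⟩ := ihx
    obtain ⟨a', b', rfl⟩ := ihy
    exact ⟨a + a', b + b', by push_cast; ring⟩
  | mul x y _ _ ihx ihy =>
    obtain ⟨a, b, rfl⟩ := ihx
    obtain ⟨a', b', rfl⟩ := ihy
    refine ⟨a * a' + b * b' * D, a * b' + a' * b, ?_⟩
    push_cast
    linear_combination (b * b' : ℂ) * sqrtC_sq D

lemma Qsqrt_sq_mul {n : ℤ} (hn : n ≠ 0) (d : ℤ) : Qsqrt (n ^ 2 * d) = Qsqrt d := by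
  have hn' : (n : ℂ) ≠ 0 := by exact_mod_cast hn
  have h_sq : sqrtC (n ^ 2 * d) ^ 2 = (n * sqrtC d) ^ 2 := by
    rw [mul_pow, sqrtC_sq, sqrtC_sq]
    push_cast
    rfl
  apply le_antisymm <;> refine IntermediateField.adjoin_simple_le_iff.2 ?_
  · have h_mem := mul_mem (intCast_mem (Qsqrt d) n) (sqrtC_mem_Qsqrt d)
    rcases sq_eq_sq_iff_eq_or_eq_neg.1 h_sq with h | h <;> rw [h]
    exacts [h_mem, neg_mem h_mem]
  · have h_mem := div_mem (sqrtC_mem_Qsqrt (n ^ 2 * d)) (intCast_mem _ n)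
    rcases sq_eq_sq_iff_eq_or_eq_neg.1 h_sq with h | h <;> rw [h] at h_mem
    · rwa [mul_div_cancel_left₀ _ hn'] at h_mem
    · rwa [neg_div, mul_div_cancel_left₀ _ hn', neg_mem_iff] at h_mem

lemma classNumber_Qsqrt_sq_mul {n : ℤ} (hn : n ≠ 0) (d : ℤ) :
    classNumber (Qsqrt (n ^ 2 * d)) = classNumber (Qsqrt d) := by
  congr! 1 <;> rw [Qsqrt_sq_mul hn]

lemma conj_sqrtC_of_neg (hD : D < 0) : starRingEnd ℂ (sqrtC D) = -sqrtC D := by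
  have h_sq : starRingEnd ℂ (sqrtC D) ^ 2 = sqrtC D ^ 2 := by
    rw [← map_pow, sqrtC_sq, map_intCast]
  refine (sq_eq_sq_iff_eq_or_eq_neg.1 h_sq).resolve_left fun h_real => ?_
  obtain ⟨r, hr⟩ := Complex.conj_eq_iff_real.1 h_real
  have hr_sq : r ^ 2 = (D : ℝ) := by
    have := sqrtC_sq D
    rw [hr] at this
    exact_mod_cast this
  have : (D : ℝ) < 0 := by exact_mod_cast hD
  linarith [sq_nonneg r]

lemma isIntegral_conj {x : ℂ} (hx : IsIntegral ℤ x) : IsIntegral ℤ (starRingEnd ℂ x) :=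
  hx.map (starRingEnd ℂ).toIntAlgHom

lemma exists_trace_norm_of_mem_Qsqrt (hD : D < 0) {x : ℂ} (hx : x ∈ Qsqrt D)
    (hxi : IsIntegral ℤ x) :
    ∃ T N : ℤ, x + starRingEnd ℂ x = T ∧ x * starRingEnd ℂ x = N ∧
      IsSquare ((T ^ 2 - 4 * N) * D) := by
  obtain ⟨a, b, hab⟩ := exists_rat_add_rat_mul_sqrtC_of_mem_Qsqrt hx
  have h_conj : starRingEnd ℂ x = a - b * sqrtC D := by
    rw [hab, map_add, map_mul, conj_sqrtC_of_neg hD, map_ratCast, map_ratCast]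
    ring
  have h_trace : x + starRingEnd ℂ x = ((2 * a : ℚ) : ℂ) := by
    rw [h_conj, hab]
    push_cast
    ring
  have h_norm : x * starRingEnd ℂ x = ((a ^ 2 - b ^ 2 * D : ℚ) : ℂ) := by
    rw [h_conj, hab]
    push_cast
    linear_combination (-b ^ 2 : ℂ) * sqrtC_sq D
  obtain ⟨T, hT⟩ := (hxi.add (isIntegral_conj hxi)).exists_int_iff_exists_rat.1 ⟨_, h_trace⟩
  obtain ⟨N, hN⟩ := (hxi.mul (isIntegral_conj hxi)).exists_int_iff_exists_rat.1 ⟨_, h_norm⟩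
  refine ⟨T, N, hT, hN, Rat.isSquare_intCast_iff.1 ⟨2 * b * D, ?_⟩⟩
  have hT' : (T : ℚ) = 2 * a := by exact_mod_cast hT.symm.trans h_trace
  have hN' : (N : ℚ) = a ^ 2 - b ^ 2 * D := by exact_mod_cast hN.symm.trans h_norm
  push_cast
  rw [hT', hN']
  ring

lemma mul_conj_eq_one_of_units (hD : D < 0) (u : (𝓞 (Qsqrt D))ˣ) :
    algebraMap (𝓞 (Qsqrt D)) ℂ u * starRingEnd ℂ (algebraMap (𝓞 (Qsqrt D)) ℂ u) = 1 := by
  obtain ⟨-, N, -, hN, -⟩ := exists_trace_norm_of_mem_Qsqrt hD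
    (algebraMap_ringOfIntegers_mem (u : 𝓞 (Qsqrt D)))
    (isIntegral_algebraMap_ringOfIntegers _)
  obtain ⟨-, N', -, hN', -⟩ := exists_trace_norm_of_mem_Qsqrt hD
    (algebraMap_ringOfIntegers_mem (↑u⁻¹ : 𝓞 (Qsqrt D)))
    (isIntegral_algebraMap_ringOfIntegers _)
  have h_mul : N * N' = 1 := by
    have : (N * N' : ℂ) = 1 := by
      rw [← hN, ← hN', mul_mul_mul_comm, ← map_mul, ← map_mul, ← map_mul, Units.mul_inv,
        map_one, map_one, one_mul]
    exact_mod_cast this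
  have h_nonneg : 0 ≤ N := by
    have hN_normSq : (N : ℝ) = Complex.normSq (algebraMap (𝓞 (Qsqrt D)) ℂ u) := by
      rw [Complex.mul_conj] at hN
      exact_mod_cast hN.symm
    exact_mod_cast hN_normSq ▸ Complex.normSq_nonneg _
  rw [hN, Int.eq_one_of_mul_eq_one_right h_nonneg h_mul, Int.cast_one]

lemma units_pow_twelve_eq_one (hD : D < 0) (u : (𝓞 (Qsqrt D))ˣ) : u ^ 12 = 1 := by
  have h_norm := mul_conj_eq_one_of_units hD u
  obtain ⟨T, N, hT, hN, r, hr⟩ := exists_trace_norm_of_mem_Qsqrt hD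
    (algebraMap_ringOfIntegers_mem (u : 𝓞 (Qsqrt D)))
    (isIntegral_algebraMap_ringOfIntegers _)
  obtain rfl : N = 1 := by exact_mod_cast hN.symm.trans h_norm
  have hT_sq : T ^ 2 ≤ 4 := by nlinarith [mul_self_nonneg r]
  refine Units.ext (FaithfulSMul.algebraMap_injective (𝓞 (Qsqrt D)) ℂ ?_)
  rw [Units.val_pow_eq_pow_val, map_pow, Units.val_one, map_one]
  refine pow_twelve_eq_one_of_sq_eq hT_sq ?_
  linear_combination (algebraMap (𝓞 (Qsqrt D)) ℂ u) * hT - h_norm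

lemma exists_pow_eq_of_mul_eq_pow (hD : D < 0) {n : ℕ} (hn12 : n.Coprime 12)
    (hn : n.Coprime (classNumber (Qsqrt D))) {x y z : 𝓞 (Qsqrt D)} (hxy : IsCoprime x y)
    (h : x * y = z ^ n) : ∃ g : 𝓞 (Qsqrt D), g ^ n = x := by
  obtain ⟨g, u, hu⟩ := exists_associated_pow_of_mul_eq_pow_of_coprime_classGroup hn hxy h
  obtain ⟨k, hk⟩ := exists_pow_eq_self_of_coprime
    (hn12.of_dvd_right (orderOf_dvd_of_pow_eq_one (units_pow_twelve_eq_one hD u)))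
  refine ⟨g * ↑(u ^ k), ?_⟩
  rw [mul_pow, ← Units.val_pow_eq_pow_val, pow_right_comm, hk, hu]

end ImaginaryQuadratic

section Family

variable {m D : ℤ} {p k : ℕ}

lemma one_sub_two_mul_pow_neg_s4 (hm : 0 < m) : 1 - 2 * m ^ p < 0 := by
  have := pow_pos hm p
  lia

lemma exists_pow_eq_one_sub_pow_add_sqrtC (hmodd : Odd m) (hD_neg : D < 0) (hD : D = 1 - 2 * m ^ p)
    (hp12 : p.Coprime 12) (hcl : p.Coprime (classNumber (Qsqrt D))) :
    ∃ g ∈ Qsqrt D, IsIntegral ℤ g ∧ g ^ p = 1 - m ^ p + sqrtC D := by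
  obtain ⟨s, hs⟩ := exists_ringOfIntegers_algebraMap_eq (sqrtC_mem_Qsqrt D) (isIntegral_int_sqrtC D)
  have hs_sq : s ^ 2 = 1 - 2 * (m : 𝓞 (Qsqrt D)) ^ p := by
    apply FaithfulSMul.algebraMap_injective (𝓞 (Qsqrt D)) ℂ
    rw [map_pow, hs, sqrtC_sq, map_sub, map_mul, map_pow, map_intCast, map_one, map_ofNat]
    exact_mod_cast hD
  have h_mul : (1 - m ^ p + s) * (1 - m ^ p - s) = ((m : 𝓞 (Qsqrt D)) ^ 2) ^ p := by
    rw [pow_right_comm]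
    linear_combination -hs_sq
  have h_coprime : IsCoprime (1 - m ^ p + s) (1 - m ^ p - s) := by
    have h_int : IsCoprime (2 * (1 - m ^ p)) ((m ^ 2) ^ p) := by
      rw [pow_right_comm]
      refine (IsCoprime.mul_left ?_ ⟨1, 1, by ring⟩).pow_right
      exact Int.isCoprime_two_left.2 hmodd.pow
    obtain ⟨a, b, hab⟩ := h_int.map (Int.castRingHom (𝓞 (Qsqrt D)))
    simp only [map_mul, map_sub, map_pow, eq_intCast, Int.cast_ofNat, Int.cast_one] at hab
    exact ⟨a + b * (1 - m ^ p - s), a, by linear_combination hab + b * h_mul⟩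
  obtain ⟨g, hg⟩ := exists_pow_eq_of_mul_eq_pow hD_neg hp12 hcl h_coprime h_mul
  refine ⟨_, algebraMap_ringOfIntegers_mem g, isIntegral_algebraMap_ringOfIntegers g, ?_⟩
  rw [← map_pow, hg, map_add, hs]
  simp

lemma exists_pow_eq_two_pow_mul_one_add_sqrtC (hmodd : Odd m)
    (hpk : p = 2 * k + 1) (hD_neg : D < 0) (hD : D = 1 - 2 * m ^ p) (hp12 : p.Coprime 12)
    (hcl : p.Coprime (classNumber (Qsqrt D))) :
    ∃ δ ∈ Qsqrt D, IsIntegral ℤ δ ∧ δ ^ p = 2 ^ k * (1 + sqrtC D) := by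
  obtain ⟨g, hg_mem, hg_int, hg⟩ := exists_pow_eq_one_sub_pow_add_sqrtC hmodd hD_neg hD hp12 hcl
  have hD' : (D : ℂ) = 1 - 2 * m ^ p := by exact_mod_cast congrArg (Int.cast : ℤ → ℂ) hD
  have h_sq : (1 + sqrtC D) ^ 2 = 2 * g ^ (2 * k + 1) := by
    rw [← hpk, hg]
    linear_combination sqrtC_sq D + hD'
  have hg_ne : g ≠ 0 := by
    rintro rfl
    have h_sqrt : sqrtC D = -1 := by
      rw [zero_pow (Nat.succ_ne_zero _), mul_zero, sq_eq_zero_iff] at h_sq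
      linear_combination h_sq
    have hD_one : D = 1 := by
      have := sqrtC_sq D
      rw [h_sqrt, neg_one_sq] at this
      exact_mod_cast this.symm
    lia
  refine ⟨(1 + sqrtC D) / g ^ k, div_mem (add_mem (one_mem _) (sqrtC_mem_Qsqrt D))
    (pow_mem hg_mem k), IsIntegral.of_pow two_pos ?_, ?_⟩
  · rw [div_pow_sq_of_sq_eq_mul_pow hg_ne h_sq]
    exact (isIntegral_algebraMap (x := (2 : ℤ))).mul hg_int
  · rw [hpk, div_pow_pow_of_sq_eq_mul_pow hg_ne h_sq]

lemma emod_four_eq_two_of_isSquare {T : ℤ} (hmodd : Odd m) (hD : D % 4 = 3)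
    (h : IsSquare ((T ^ 2 - 8 * m) * D)) : T % 4 = 2 := by
  obtain ⟨r, hr⟩ := h
  obtain ⟨c, rfl⟩ := hmodd
  obtain ⟨d, rfl⟩ : ∃ d, D = 4 * d + 3 := ⟨D / 4, by lia⟩
  have h_not_odd : ¬ Odd T := by
    rintro ⟨t, rfl⟩
    obtain ⟨b, rfl | rfl⟩ := r.even_or_odd' <;> ring_nf at hr <;> lia
  have h_not_dvd : ¬ 4 ∣ T := by
    rintro ⟨t, rfl⟩
    obtain ⟨b, rfl | rfl⟩ := r.even_or_odd'
    · -- Here `b ^ 2 ≡ 2 [ZMOD 4]`.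
      obtain ⟨a, rfl | rfl⟩ := b.even_or_odd' <;> ring_nf at hr <;> lia
    · ring_nf at hr
      lia
  rw [Int.not_odd_iff_even, Int.even_iff] at h_not_odd
  lia

lemma exists_units_eq_two_mul_of_dvd_two_pow {T : ℤ} (hT : T % 4 = 2) {n : ℕ} (h : T ∣ 2 ^ n) :
    ∃ e : ℤˣ, T = 2 * e := by
  obtain ⟨t, rfl⟩ : 2 ∣ T := by lia
  have h_coprime : IsCoprime t (2 ^ n) :=
    (Int.isCoprime_two_right.2 (Int.odd_iff.2 (by lia))).pow_right
  exact ⟨(h_coprime.isUnit_of_dvd (dvd_of_mul_left_dvd h)).unit, rfl⟩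

lemma conj_pow_eq_two_pow_mul_one_sub_sqrtC (hD : D < 0) {δ : ℂ}
    (hδ : δ ^ p = 2 ^ k * (1 + sqrtC D)) :
    starRingEnd ℂ δ ^ p = 2 ^ k * (1 - sqrtC D) := by
  rw [← map_pow, hδ, map_mul, map_pow, map_add, conj_sqrtC_of_neg hD, map_one,
    Complex.conj_ofNat, sub_eq_add_neg]

lemma norm_eq_two_mul_of_pow_eq (hpk : p = 2 * k + 1) (hD_neg : D < 0)
    (hD : D = 1 - 2 * m ^ p) {δ : ℂ} (hδ : δ ^ p = 2 ^ k * (1 + sqrtC D)) {N : ℤ}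
    (hN : δ * starRingEnd ℂ δ = N) : N = 2 * m := by
  have h_pow : (N : ℂ) ^ p = (2 * m) ^ p := by
    have hD' : (D : ℂ) = 1 - 2 * m ^ p := by exact_mod_cast congrArg (Int.cast : ℤ → ℂ) hD
    have h_two : (2 : ℂ) ^ p = 2 ^ k * 2 ^ k * 2 := by
      rw [hpk]
      ring
    rw [← hN, mul_pow, hδ, conj_pow_eq_two_pow_mul_one_sub_sqrtC hD_neg hδ, mul_pow, h_two]
    linear_combination (-(2 ^ k * 2 ^ k) : ℂ) * (sqrtC_sq D + hD')
  exact (Odd.strictMono_pow ⟨k, hpk⟩).injective (by exact_mod_cast h_pow)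

lemma exists_isIntegral_add_mul_pow_add_pow (hm : 0 < m) (hmodd : Odd m)
    (hpk : p = 2 * k + 1) (hp12 : p.Coprime 12)
    (hcl : p.Coprime (classNumber (Qsqrt (1 - 2 * m ^ p)))) :
    ∃ x y : ℂ, IsIntegral ℤ x ∧ IsIntegral ℤ y ∧ x * y = (2 * m : ℤ) ∧
      x ^ p + y ^ p = (2 ^ (k + 1) : ℤ) ∧ ∃ T : ℤ, x + y = T ∧ T % 4 = 2 := by
  have hD_neg := one_sub_two_mul_pow_neg_s4 (p := p) hm
  obtain ⟨δ, hδ_mem, hδ_int, hδ⟩ :=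
    exists_pow_eq_two_pow_mul_one_add_sqrtC hmodd hpk hD_neg rfl hp12 hcl
  obtain ⟨T, N, hT, hN, h_sq⟩ := exists_trace_norm_of_mem_Qsqrt hD_neg hδ_mem hδ_int
  obtain rfl := norm_eq_two_mul_of_pow_eq hpk hD_neg rfl hδ hN
  refine ⟨δ, starRingEnd ℂ δ, hδ_int, isIntegral_conj hδ_int, hN, ?_, T, hT, ?_⟩
  · rw [conj_pow_eq_two_pow_mul_one_sub_sqrtC hD_neg hδ, hδ]
    push_cast
    ring
  · have hD_mod : (1 - 2 * m ^ p) % 4 = 3 := by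
      have := Int.odd_iff.1 (hmodd.pow (n := p))
      lia
    refine emod_four_eq_two_of_isSquare hmodd hD_mod ?_
    rwa [← mul_assoc] at h_sq

lemma exists_units_mul_dvd_two_pow_sub_of_not_dvd_classNumber (hm : 0 < m)
    (hmodd : Odd m) (hpk : p = 2 * k + 1) (hp : p.Prime) (hp3 : 3 < p)
    (hcl : ¬ p ∣ classNumber (Qsqrt (1 - 2 * m ^ p))) :
    ∃ e : ℤˣ, p * m ∣ 2 ^ k - (e : ℤ) := by
  obtain ⟨x, y, hx, hy, hN, hV, T, hT, hT_mod⟩ := exists_isIntegral_add_mul_pow_add_pow hm hmodd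
    hpk (coprime_twelve_of_prime hp hp3) (hp.coprime_iff_not_dvd.2 hcl)
  have hp_odd : Odd p := ⟨k, hpk⟩
  obtain ⟨e, rfl⟩ := exists_units_eq_two_mul_of_dvd_two_pow hT_mod
    (add_dvd_pow_add_pow_of_isIntegral hx hy hT hp_odd hV)
  refine ⟨e, ?_⟩
  have h_dvd := prime_mul_dvd_add_pow_sub_of_isIntegral hx hy hT hN hp hV
  have h_factor : (2 * (e : ℤ)) ^ p - 2 ^ (k + 1) = 2 * (2 ^ k * e * (2 ^ k - e)) := by
    rcases Int.units_eq_one_or e with rfl | rfl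
    · rw [hpk]
      push_cast
      ring
    · rw [Units.val_neg, Units.val_one, mul_neg_one, hp_odd.neg_pow, hpk]
      ring
  rw [h_factor, mul_left_comm, mul_dvd_mul_iff_left two_ne_zero] at h_dvd
  have h_coprime : IsCoprime (p * m) (2 ^ k * e) := by
    refine (isCoprime_mul_unit_right_right e.isUnit _ _).2 ?_
    exact (Int.isCoprime_two_right.2 ((Int.odd_coe_nat p |>.2 hp_odd).mul hmodd)).pow_right
  exact h_coprime.dvd_of_dvd_mul_left h_dvd

lemma legendreSym_eq_of_dvd_pow_sub [Fact p.Prime] (hp2 : p ≠ 2) {a : ℤ} {e : ℤˣ}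
    (h : (p : ℤ) ∣ a ^ (p / 2) - e) : legendreSym p a = e := by
  have h_eq : (legendreSym p a : ZMod p) = (e : ℤ) := by
    rw [legendreSym.eq_pow, eq_comm, ← Int.cast_pow]
    exact (ZMod.intCast_eq_intCast_iff_dvd_sub _ _ _).2 h
  refine Int.cast_injOn_of_ringChar_ne_two (R := ZMod p) (by rwa [ZMod.ringChar_zmod_n])
    (quadraticChar_isQuadratic (ZMod p) a) ?_ h_eq
  rcases Int.units_eq_one_or e with rfl | rfl <;> simp

lemma dvd_two_pow_sub_legendreSym_of_not_dvd_classNumber [Fact p.Prime] (hm : 0 < m)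
    (hmodd : Odd m) (hp3 : 3 < p) (hcl : ¬ p ∣ classNumber (Qsqrt (1 - 2 * m ^ p))) :
    m ∣ 2 ^ (p / 2) - legendreSym p 2 := by
  have hp : p.Prime := Fact.out
  have hp2 : p ≠ 2 := by lia
  obtain ⟨e, he⟩ := exists_units_mul_dvd_two_pow_sub_of_not_dvd_classNumber hm hmodd
    (Nat.two_mul_div_two_add_one_of_odd (hp.odd_of_ne_two hp2)).symm hp hp3 hcl
  rw [legendreSym_eq_of_dvd_pow_sub hp2 (dvd_of_mul_right_dvd he)]
  exact dvd_of_mul_left_dvd he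

lemma exists_coprime_forall_prime_modEq_dvd_classNumber (hm : 3 ≤ m) (hmodd : Odd m) :
    ∃ r : ℕ, r.Coprime 8 ∧ ∀ p : ℕ, p.Prime → p ≡ r [MOD 8] →
      p ∣ classNumber (Qsqrt (1 - 2 * m ^ p)) := by
  lift m to ℕ using by lia
  have hm2 : Fact (2 < m) := ⟨by lia⟩
  have h_two_pow {p : ℕ} [Fact p.Prime] (hp3 : 3 < p)
      (hcl : ¬ p ∣ classNumber (Qsqrt (1 - 2 * m ^ p))) :
      (2 : ZMod m) ^ (p / 2) = (ZMod.χ₈ p : ℤ) := by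
    have h := dvd_two_pow_sub_legendreSym_of_not_dvd_classNumber (by lia) hmodd hp3 hcl
    rw [legendreSym.at_two (by lia)] at h
    simpa [sub_eq_zero] using (ZMod.intCast_zmod_eq_zero_iff_dvd _ m).2 h
  rcases Nat.even_or_odd (orderOf (2 : ZMod m)) with h_order | h_order
  · refine ⟨7, by decide, fun p hp hp7 => by_contra fun hcl => ?_⟩
    have : Fact p.Prime := ⟨hp⟩
    have hp_mod : p % 8 = 7 := hp7
    have h_pow : (2 : ZMod m) ^ (p / 2) = 1 := by
      rw [h_two_pow (by lia) hcl, ZMod.χ₈_nat_mod_eight, hp_mod,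
        show ZMod.χ₈ (7 : ℕ) = 1 from rfl, Int.cast_one]
    have := h_order.two_dvd.trans (orderOf_dvd_of_pow_eq_one h_pow)
    lia
  · refine ⟨5, by decide, fun p hp hp5 => by_contra fun hcl => ?_⟩
    have : Fact p.Prime := ⟨hp⟩
    have hp_mod : p % 8 = 5 := hp5
    have h_pow : (2 : ZMod m) ^ (p / 2) = -1 := by
      rw [h_two_pow (by lia) hcl, ZMod.χ₈_nat_mod_eight, hp_mod,
        show ZMod.χ₈ (5 : ℕ) = -1 from rfl, Int.cast_neg, Int.cast_one]
    exact ZMod.neg_one_ne_one (neg_one_eq_one_of_pow_eq_neg_one_of_odd_orderOf h_order h_pow)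

end Family

/-- For a fixed odd integer `m ≥ 3`, the collection of distinct imaginary quadratic fields
`ℚ(√(1 - 2 m ^ p))`, with `p` prime dividing the class number of `ℚ(√(1 - 2 m ^ p))`,
is infinite; the fields are described via the square-free parts `d` of `1 - 2 m ^ p`. -/
theorem infinite_collection_of_fields_with_p_dvd_classNumber
    (m : ℤ) (hm : 3 ≤ m) (hmodd : Odd m) :
    {d : ℤ | Squarefree d ∧ d < 0 ∧
      ∃ p : ℕ, p.Prime ∧ (∃ n : ℤ, 0 < n ∧ 1 - 2 * m ^ p = n ^ 2 * d) ∧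
        p ∣ NumberField.classNumber (Qsqrt (1 - 2 * m ^ p))}.Infinite := by
  obtain ⟨r, hr, h_dvd⟩ := exists_coprime_forall_prime_modEq_dvd_classNumber hm hmodd
  refine Set.Infinite.of_image (fun d => classNumber (Qsqrt d))
    (Set.infinite_of_forall_exists_gt fun B => ?_)
  obtain ⟨p, hpB, hp, hpr⟩ := Nat.forall_exists_prime_gt_and_modEq B (by norm_num) hr
  obtain ⟨n, d, hnd, hd⟩ := exists_sq_mul_squarefree (1 - 2 * m ^ p)
  have hD_neg : (n : ℤ) ^ 2 * d < 0 := hnd ▸ one_sub_two_mul_pow_neg_s4 (by lia)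
  have hn : (n : ℤ) ≠ 0 := by
    rintro h
    simp [h] at hD_neg
  have hp_dvd : p ∣ classNumber (Qsqrt (1 - 2 * m ^ p)) := h_dvd p hp hpr
  refine ⟨_, ⟨d, ⟨hd, by nlinarith, p, hp, ⟨n, by lia, hnd⟩, hp_dvd⟩, rfl⟩, ?_⟩
  rw [hnd, classNumber_Qsqrt_sq_mul hn] at hp_dvd
  exact hpB.trans_le (Nat.le_of_dvd (classNumber_pos _) hp_dvd)
end
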